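/- arXiv:2402.07762 — 2 statements merged into one kernel-verified Lean document; each statement's English description precedes it below -/
import Mathlib

section
/- The number of stagings of $\mathcal{X}_{[i]}$ in which every stage has at most two context variables equals $1 - \binom{i}{2} + \sum_{k=1}^{i} i^{d_k}$. -/
/-!
A staging with at most two context variables per stage is a decision tree of depth at most two.
Two disjoint stages must disagree on a common context variable, so the context sets of a nontrivial
staging are nonempty and pairwise intersecting. They cannot contain a triangle
`{a, b}, {b, c}, {a, c}`: the stage through a suitably chosen point would need `a`, `b` and `c` among
its context variables. Hence some variable `k` lies in every context set
(`exists_common_variable`), and the context set of the stage through `y` depends only on `y k`, so it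
equals `{k, f (y k)}` for some `f : Fin (d k) → Fin i`, where `f v = k` encodes a fibre that is not
split further. The staging is then `rootedStaging d k f` (`eq_trivial_or_rooted`).

For each root `k` there are `i ^ d k` functions `f`. Two pairs `(k, f) ≠ (l, g)` give the same staging
only if `k ≠ l`, `f` is constantly `l` and `g` is constantly `k`; each unordered pair `{k, l}` of
variables is thus counted twice. Removing the `i.choose 2` duplicates and adding the trivial staging
gives the formula.
-/

open Finset

/-- The stage `𝒮(x_S)` with set of context variables `S` and stage-defining context given by
the coordinates of `x` lying in `S`: the set of points of the level `∀ k : Fin i, Fin (d k)`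
that agree with `x` on the coordinates in `S`. -/
def stage {i : ℕ} (d : Fin i → ℕ) (S : Finset (Fin i)) (x : ∀ k : Fin i, Fin (d k)) :
    Set (∀ k : Fin i, Fin (d k)) :=
  {y | ∀ k ∈ S, y k = x k}

/-- A staging of the level `∀ k : Fin i, Fin (d k)`: a partition of the level into
pairwise disjoint nonempty stages whose union is the whole level. -/
structure IsStaging {i : ℕ} (d : Fin i → ℕ)
    (𝔰 : Set (Set (∀ k : Fin i, Fin (d k)))) : Prop where
  isStage : ∀ s ∈ 𝔰, ∃ S x, s = stage d S x
  nonempty : ∀ s ∈ 𝔰, s.Nonempty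
  pairwiseDisjoint : ∀ s ∈ 𝔰, ∀ t ∈ 𝔰, s ≠ t → Disjoint s t
  covers : ∀ y, ∃ s ∈ 𝔰, y ∈ s

section Stagings

variable {i : ℕ} {d : Fin i → ℕ}

theorem self_mem_stage (S : Finset (Fin i)) (x : ∀ k, Fin (d k)) : x ∈ stage d S x :=
  fun _ _ => rfl

/-- Any point of a stage may serve as its base point. -/
theorem stage_eq_of_mem {S : Finset (Fin i)} {x y : ∀ k, Fin (d k)} (h : y ∈ stage d S x) :
    stage d S x = stage d S y := by
  ext z
  exact ⟨fun hz k hk => (hz k hk).trans (h k hk).symm, fun hz k hk => (hz k hk).trans (h k hk)⟩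

theorem context_subset_of_stage_subset (hd : ∀ m, 2 ≤ d m) {S T : Finset (Fin i)}
    {x y : ∀ k, Fin (d k)} (h : stage d T y ⊆ stage d S x) : S ⊆ T := by
  intro k hk
  by_contra hkT
  -- A stage that does not fix the coordinate `k` contains a point whose value there is not `x k`.
  have : Nontrivial (Fin (d k)) := Fin.nontrivial_iff_two_le.2 (hd k)
  obtain ⟨v, hv⟩ := exists_ne (x k)
  have hmem : Function.update y k v ∈ stage d T y := by
    intro j hj
    rw [Function.update_of_ne (by rintro rfl; exact hkT hj)]
  have := h hmem k hk
  simp only [Function.update_self] at this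
  exact hv this

theorem context_unique (hd : ∀ m, 2 ≤ d m) {S T : Finset (Fin i)}
    {x y : ∀ k, Fin (d k)} (h : stage d S x = stage d T y) : S = T :=
  (context_subset_of_stage_subset hd h.ge).antisymm (context_subset_of_stage_subset hd h.le)

theorem exists_separating_variable {S T : Finset (Fin i)} {x y : ∀ k, Fin (d k)}
    (h : Disjoint (stage d S x) (stage d T y)) : ∃ k, k ∈ S ∧ k ∈ T ∧ x k ≠ y k := by
  by_contra! hc
  refine Set.not_disjoint_iff.2 ⟨fun k => if k ∈ S then x k else y k, ?_, ?_⟩ h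
  · intro k hk
    simp [hk]
  · intro k hk
    by_cases hS : k ∈ S
    · simp [hS, hc k hS hk]
    · simp [hS]

/-- The stagings counted by the theorem: every stage has at most two context variables. -/
def IsShallow (d : Fin i → ℕ) (𝔰 : Set (Set (∀ k : Fin i, Fin (d k)))) : Prop :=
  IsStaging d 𝔰 ∧ ∀ s ∈ 𝔰, ∃ S x, s = stage d S x ∧ S.card ≤ 2

/-- The staging that splits on the variable `k` first and then splits the fibre over `v` on the
variable `f v`; the value `f v = k` means that this fibre is left whole. -/
def rootedStaging (d : Fin i → ℕ) (k : Fin i) (f : Fin (d k) → Fin i) :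
    Set (Set (∀ k : Fin i, Fin (d k))) :=
  Set.range fun x => stage d {k, f (x k)} x

theorem rootedStaging_isShallow (k : Fin i) (f : Fin (d k) → Fin i) :
    IsShallow d (rootedStaging d k f) := by
  refine ⟨⟨?_, ?_, ?_, fun y => ⟨_, ⟨y, rfl⟩, self_mem_stage _ y⟩⟩, ?_⟩
  · rintro _ ⟨x, rfl⟩
    exact ⟨_, x, rfl⟩
  · rintro _ ⟨x, rfl⟩
    exact ⟨x, self_mem_stage _ x⟩
  · rintro _ ⟨x, rfl⟩ _ ⟨y, rfl⟩ hne
    refine Set.disjoint_left.2 fun z hx hy => hne ?_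
    have hxy : x k = y k := (hx k (by simp)).symm.trans (hy k (by simp))
    simp only at hx hy ⊢
    rw [stage_eq_of_mem hx, stage_eq_of_mem hy, hxy]
  · rintro _ ⟨x, rfl⟩
    exact ⟨_, x, rfl, Finset.card_le_two⟩

theorem trivial_isShallow (hd : ∀ m, 2 ≤ d m) :
    IsShallow d {(Set.univ : Set (∀ k : Fin i, Fin (d k)))} := by
  let x₀ : ∀ k, Fin (d k) := fun k => ⟨0, by have := hd k; omega⟩
  have h : (Set.univ : Set (∀ k : Fin i, Fin (d k))) = stage d ∅ x₀ := by
    ext; simp [stage]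
  refine ⟨⟨?_, ?_, ?_, ?_⟩, ?_⟩
  · rintro s rfl
    exact ⟨∅, x₀, h⟩
  · rintro s rfl
    exact ⟨x₀, trivial⟩
  · rintro s rfl t rfl hne
    exact (hne rfl).elim
  · exact fun y => ⟨_, rfl, trivial⟩
  · rintro s rfl
    exact ⟨∅, x₀, h, by simp⟩

/-- If `σ` assigns to each point the context set of the stage through it, all context sets are
nonempty, and any two distinct stages disagree on a common context variable, then some variable
belongs to every context set. -/
theorem exists_common_variable {σ : (∀ k : Fin i, Fin (d k)) → Finset (Fin i)}
    (x₀ : ∀ k, Fin (d k))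
    (hcard : ∀ y, (σ y).card ≤ 2) (hne : ∀ y, (σ y).Nonempty)
    (hsep : ∀ x y, stage d (σ x) x = stage d (σ y) y ∨
      ∃ k, k ∈ σ x ∧ k ∈ σ y ∧ x k ≠ y k)
    (hσ : ∀ x y, stage d (σ x) x = stage d (σ y) y → σ x = σ y) :
    ∃ k, ∀ y, k ∈ σ y := by
  by_contra! hc
  obtain ⟨a, ha⟩ := hne x₀
  obtain ⟨y, hy⟩ := hc a
  obtain ⟨b, hb, hby, hxyb⟩ := (hsep x₀ y).resolve_left fun h => hy (hσ _ _ h ▸ ha)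
  obtain ⟨z, hz⟩ := hc b
  obtain ⟨a', ha', ha'z, hxza⟩ := (hsep x₀ z).resolve_left fun h => hz (hσ _ _ h ▸ hb)
  obtain ⟨c, hcy, hcz, hyzc⟩ := (hsep y z).resolve_left fun h => hz (hσ _ _ h ▸ hby)
  have hab : a ≠ b := by rintro rfl; exact hy hby
  have hne_b : a' ≠ b := by rintro rfl; exact hz ha'z
  have hca : c ≠ a := by rintro rfl; exact hy hcy
  have hcb : c ≠ b := by rintro rfl; exact hz hcz
  have two : ∀ {S : Finset (Fin i)} {p q r : Fin i}, S.card ≤ 2 → p ∈ S → q ∈ S → p ≠ q →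
      r ∈ S → r = p ∨ r = q := by
    intro S p q r hS hp hq hpq hr
    by_contra! hne'
    have : ({r, p, q} : Finset (Fin i)).card ≤ 2 :=
      (Finset.card_le_card (by
        intro t ht
        simp only [Finset.mem_insert, Finset.mem_singleton] at ht
        rcases ht with rfl | rfl | rfl <;> assumption)).trans hS
    rw [Finset.card_eq_three.2 ⟨r, p, q, hne'.1, hne'.2, hpq, rfl⟩] at this
    omega
  obtain rfl : a' = a := (two (hcard x₀) ha hb hab ha').resolve_right hne_b
  -- The context sets at `x₀`, `y`, `z` are `{a, b}`, `{b, c}`, `{a, c}`. The stage through `p`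
  -- can be separated from them only at `b`, `c`, `a` respectively.
  let p : ∀ k, Fin (d k) := fun k => if k = a' then x₀ k else if k = b then y k else z k
  have pa : p a' = x₀ a' := by simp [p]
  have pb : p b = y b := by simp [p, hab.symm]
  have pc : p c = z c := by simp [p, hca, hcb]
  have sep : ∀ w, p ∉ stage d (σ w) w → ∃ k, k ∈ σ p ∧ k ∈ σ w ∧ p k ≠ w k := fun w hw =>
    (hsep p w).resolve_left fun h => hw (h ▸ self_mem_stage _ p)
  obtain ⟨k₁, h₁p, h₁, hk₁⟩ := sep x₀ fun h => hxyb ((h b hb).symm.trans pb)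
  obtain ⟨k₂, h₂p, h₂, hk₂⟩ := sep y fun h => hyzc ((h c hcy).symm.trans pc)
  obtain ⟨k₃, h₃p, h₃, hk₃⟩ := sep z fun h => hxza (pa.symm.trans (h a' ha'z))
  obtain rfl : k₁ = b := (two (hcard x₀) ha hb hab h₁).resolve_left
    (by rintro rfl; exact hk₁ pa)
  obtain rfl : k₂ = c := (two (hcard y) hby hcy hcb.symm h₂).resolve_left
    (by rintro rfl; exact hk₂ pb)
  obtain rfl : k₃ = a' := (two (hcard z) ha'z hcz hca.symm h₃).resolve_right
    (by rintro rfl; exact hk₃ pc)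
  rcases two (hcard p) h₃p h₁p hab h₂p with h | h
  · exact hca h
  · exact hcb h

theorem eq_trivial_or_rooted (hd : ∀ m, 2 ≤ d m) {𝔰 : Set (Set (∀ k : Fin i, Fin (d k)))}
    (h : IsShallow d 𝔰) : 𝔰 = {Set.univ} ∨ ∃ k f, 𝔰 = rootedStaging d k f := by
  let x₀ : ∀ k, Fin (d k) := fun k => ⟨0, by have := hd k; omega⟩
  have hex : ∀ y, ∃ S : Finset (Fin i), S.card ≤ 2 ∧ stage d S y ∈ 𝔰 := by
    intro y
    obtain ⟨s, hs, hy⟩ := h.1.covers y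
    obtain ⟨S, x, rfl, hS⟩ := h.2 s hs
    exact ⟨S, hS, stage_eq_of_mem hy ▸ hs⟩
  choose σ hcard hmem using hex
  have hrange : 𝔰 = Set.range fun y => stage d (σ y) y := by
    ext s
    refine ⟨fun hs => ?_, by rintro ⟨y, rfl⟩; exact hmem y⟩
    obtain ⟨y, hy⟩ := h.1.nonempty s hs
    refine ⟨y, ?_⟩
    by_contra hne
    exact Set.disjoint_left.1 (h.1.pairwiseDisjoint _ (hmem y) s hs hne) (self_mem_stage _ y) hy
  have hsep : ∀ x y, stage d (σ x) x = stage d (σ y) y ∨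
      ∃ k, k ∈ σ x ∧ k ∈ σ y ∧ x k ≠ y k := by
    intro x y
    by_cases hxy : stage d (σ x) x = stage d (σ y) y
    · exact Or.inl hxy
    · exact Or.inr
        (exists_separating_variable (h.1.pairwiseDisjoint _ (hmem x) _ (hmem y) hxy))
  by_cases hne : ∀ y, (σ y).Nonempty
  · right
    obtain ⟨k, hk⟩ := exists_common_variable x₀ hcard hne hsep fun x y => context_unique hd
    have hother : ∀ y, ∃ j, σ y = {k, j} := by
      intro y
      rcases Finset.eq_singleton_or_nontrivial (hk y) with hy | hy
      · exact ⟨k, by simp [hy]⟩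
      · obtain ⟨j, hj, hjk⟩ := hy.exists_ne k
        refine ⟨j, (Finset.eq_of_subset_of_card_le ?_ ?_).symm⟩
        · simp [Finset.insert_subset_iff, hk y, Finset.mem_coe.1 hj]
        · rw [Finset.card_pair hjk.symm]
          exact hcard y
    choose j hj using hother
    have hdep : ∀ x y, x k = y k → σ x = σ y := by
      intro x y hxy
      rcases hsep x y with hst | ⟨l, hlx, hly, hl⟩
      · exact context_unique hd hst
      · have hlk : l ≠ k := by rintro rfl; exact hl hxy
        rw [hj x, Finset.mem_insert, Finset.mem_singleton] at hlx
        rw [hj y, Finset.mem_insert, Finset.mem_singleton] at hly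
        rw [hj x, hj y, ← hlx.resolve_left hlk, ← hly.resolve_left hlk]
    refine ⟨k, fun v => j (Function.update x₀ k v), ?_⟩
    rw [hrange, rootedStaging]
    congr 1
    ext1 y
    rw [← hj, hdep y (Function.update x₀ k (y k)) (by simp)]
  · left
    push Not at hne
    obtain ⟨y, hy⟩ := hne
    have huniv : Set.univ ∈ 𝔰 := by
      have hy' := hmem y
      rw [hy] at hy'
      convert hy'
      ext
      simp [stage]
    ext s
    refine ⟨fun hs => ?_, by rintro rfl; exact huniv⟩
    by_contra hs'
    obtain ⟨z, hz⟩ := h.1.nonempty s hs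
    exact Set.disjoint_left.1 (h.1.pairwiseDisjoint s hs _ huniv hs') hz trivial

theorem rootedStaging_ne_trivial (hd : ∀ m, 2 ≤ d m) (k : Fin i) (f : Fin (d k) → Fin i) :
    rootedStaging d k f ≠ {Set.univ} := by
  intro h
  let x₀ : ∀ k, Fin (d k) := fun k => ⟨0, by have := hd k; omega⟩
  have h1 : stage d {k, f (x₀ k)} x₀ ∈ ({Set.univ} : Set (Set (∀ k : Fin i, Fin (d k)))) :=
    h ▸ ⟨x₀, rfl⟩
  have h2 : stage d ∅ x₀ = stage d {k, f (x₀ k)} x₀ := by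
    rw [Set.mem_singleton_iff.1 h1]
    ext
    simp [stage]
  exact Finset.insert_ne_empty _ _ (context_unique hd h2).symm

theorem rootedStaging_eq_iff (hd : ∀ m, 2 ≤ d m) {k l : Fin i} {f : Fin (d k) → Fin i}
    {g : Fin (d l) → Fin i} :
    rootedStaging d k f = rootedStaging d l g ↔
      ∀ x : (∀ k, Fin (d k)), ({k, f (x k)} : Finset (Fin i)) = {l, g (x l)} := by
  constructor
  · intro h x
    have hx : stage d {k, f (x k)} x ∈ rootedStaging d l g := h ▸ ⟨x, rfl⟩
    obtain ⟨y, hy⟩ := hx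
    simp only at hy
    have hxy : x ∈ stage d {l, g (y l)} y := hy ▸ self_mem_stage _ x
    rw [hxy l (by simp)]
    exact (context_unique hd hy).symm
  · intro h
    simp only [rootedStaging, h]

theorem rootedStaging_injective (hd : ∀ m, 2 ≤ d m) (k : Fin i) :
    Function.Injective (rootedStaging d k) := by
  intro f g h
  ext1 v
  let x : ∀ k, Fin (d k) :=
    Function.update (fun k => ⟨0, by have := hd k; omega⟩) k v
  have hx := (rootedStaging_eq_iff hd).1 h x
  have hv : x k = v := by simp [x]
  rw [hv] at hx
  have h1 : f v ∈ ({k, g v} : Finset (Fin i)) := hx ▸ by simp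
  have h2 : g v ∈ ({k, f v} : Finset (Fin i)) := hx ▸ by simp
  simp only [Finset.mem_insert, Finset.mem_singleton] at h1 h2
  grind

/-- A staging with root `k` that also has a root `l ≠ k` splits every fibre over `k` on `l`. -/
theorem eq_const_of_rootedStaging_eq (hd : ∀ m, 2 ≤ d m) {k l : Fin i} (hkl : k ≠ l)
    {f : Fin (d k) → Fin i} {g : Fin (d l) → Fin i}
    (h : rootedStaging d k f = rootedStaging d l g) : f = fun _ => l := by
  ext1 v
  let x : ∀ k, Fin (d k) :=
    Function.update (fun k => ⟨0, by have := hd k; omega⟩) k v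
  have hx := (rootedStaging_eq_iff hd).1 h x
  have hv : x k = v := by simp [x]
  rw [hv] at hx
  have h1 : l ∈ ({k, f v} : Finset (Fin i)) := hx ▸ by simp
  simp only [Finset.mem_insert, Finset.mem_singleton] at h1
  exact (h1.resolve_left hkl.symm).symm

theorem rootedStaging_const_comm (hd : ∀ m, 2 ≤ d m) (k l : Fin i) :
    rootedStaging d k (fun _ => l) = rootedStaging d l (fun _ => k) :=
  (rootedStaging_eq_iff hd).2 fun _ => Finset.pair_comm k l

/-- The redundant encodings: `(k, const l)` with `l < k` describes the same staging as
`(l, const k)`. -/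
def redundant (d : Fin i → ℕ) : Finset (Σ k : Fin i, (Fin (d k) → Fin i)) :=
  (Finset.univ.sigma fun k : Fin i => Finset.Iio k).image fun p => ⟨p.1, fun _ => p.2⟩

theorem mem_redundant {k : Fin i} {f : Fin (d k) → Fin i} :
    (⟨k, f⟩ : Σ k : Fin i, (Fin (d k) → Fin i)) ∈ redundant d ↔ ∃ l < k, f = fun _ => l := by
  simp only [redundant, Finset.mem_image, Finset.mem_sigma, Finset.mem_univ, true_and,
    Finset.mem_Iio]
  constructor
  · rintro ⟨⟨k', l⟩, hl, he⟩
    cases he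
    exact ⟨l, hl, rfl⟩
  · rintro ⟨l, hl, rfl⟩
    exact ⟨⟨k, l⟩, hl, rfl⟩

theorem card_redundant (hd : ∀ m, 2 ≤ d m) : (redundant d).card = i.choose 2 := by
  rw [redundant, Finset.card_image_of_injective, Finset.card_sigma]
  · simp only [Fin.card_Iio]
    rw [Fin.sum_univ_eq_sum_range (fun n => n) i, Finset.sum_range_id, Nat.choose_two_right]
  · rintro ⟨k, l⟩ ⟨k', l'⟩ h
    simp only [Sigma.mk.injEq] at h
    obtain ⟨rfl, h⟩ := h
    have := congrFun (eq_of_heq h) ⟨0, by have := hd k; omega⟩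
    rw [show l = l' from this]

/-- The staging described by an irredundant code; `none` codes the trivial staging. -/
def decode (hd : ∀ m, 2 ≤ d m) :
    Option {b : Σ k : Fin i, (Fin (d k) → Fin i) // b ∉ redundant d} →
      {𝔰 : Set (Set (∀ k : Fin i, Fin (d k))) // IsShallow d 𝔰}
  | none => ⟨{Set.univ}, trivial_isShallow hd⟩
  | some b => ⟨rootedStaging d b.1.1 b.1.2, rootedStaging_isShallow _ _⟩

theorem decode_bijective (hd : ∀ m, 2 ≤ d m) : Function.Bijective (decode hd) := by
  constructor
  · rintro (_ | ⟨⟨k, f⟩, hf⟩) (_ | ⟨⟨l, g⟩, hg⟩) h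
    · rfl
    · exact (rootedStaging_ne_trivial hd l g (congrArg Subtype.val h).symm).elim
    · exact (rootedStaging_ne_trivial hd k f (congrArg Subtype.val h)).elim
    · have h' : rootedStaging d k f = rootedStaging d l g := congrArg Subtype.val h
      rcases lt_trichotomy k l with hkl | rfl | hkl
      · exact (hg (mem_redundant.2
          ⟨k, hkl, eq_const_of_rootedStaging_eq hd hkl.ne' h'.symm⟩)).elim
      · obtain rfl := rootedStaging_injective hd k h'
        rfl
      · exact (hf (mem_redundant.2 ⟨l, hkl, eq_const_of_rootedStaging_eq hd hkl.ne' h'⟩)).elim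
  · rintro ⟨𝔰, h𝔰⟩
    rcases eq_trivial_or_rooted hd h𝔰 with rfl | ⟨k, f, rfl⟩
    · exact ⟨none, rfl⟩
    · by_cases hf : (⟨k, f⟩ : Σ k : Fin i, (Fin (d k) → Fin i)) ∈ redundant d
      · obtain ⟨l, hl, rfl⟩ := mem_redundant.1 hf
        refine ⟨some ⟨⟨l, fun _ => k⟩, fun hmem => ?_⟩, ?_⟩
        · obtain ⟨m, hm, he⟩ := mem_redundant.1 hmem
          have hkm : k = m := congrFun he ⟨0, by have := hd l; omega⟩
          exact absurd (hkm ▸ hm) hl.asymm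
        · exact Subtype.ext (rootedStaging_const_comm hd l k)
      · exact ⟨some ⟨⟨k, f⟩, hf⟩, rfl⟩

end Stagings

/-- The number of stagings of the level in which every stage has at most two context variables
equals `1 - C(i,2) + ∑_{k=1}^{i} i^{d_k}`. -/
theorem card_stagings_at_most_two_context_variables
    (i : ℕ) (hi : 1 ≤ i) (d : Fin i → ℕ) (hd : ∀ m, 2 ≤ d m) :
    (Nat.card {𝔰 : Set (Set (∀ k : Fin i, Fin (d k))) //
        IsStaging d 𝔰 ∧ ∀ s ∈ 𝔰, ∃ S x, s = stage d S x ∧ S.card ≤ 2} : ℤ)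
      = 1 - (i.choose 2 : ℤ) + ∑ k : Fin i, (i : ℤ) ^ d k := by
  have hcard := Nat.card_eq_of_bijective _ (decode_bijective hd)
  have hcodes : Fintype.card {b : Σ k : Fin i, (Fin (d k) → Fin i) // b ∉ redundant d}
      + i.choose 2 = ∑ k : Fin i, i ^ d k := by
    have h1 := Fintype.card_subtype_compl (fun b => b ∈ redundant d)
    have h2 := Finset.card_le_univ (redundant d)
    have h3 : Fintype.card (Σ k : Fin i, (Fin (d k) → Fin i)) = ∑ k : Fin i, i ^ d k := by
      simp [Fintype.card_sigma]
    rw [Fintype.card_coe, card_redundant hd] at h1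
    rw [card_redundant hd] at h2
    omega
  rw [Nat.card_eq_fintype_card, Fintype.card_option] at hcard
  change (Nat.card {𝔰 // IsShallow d 𝔰} : ℤ) = _
  rw [← hcard]
  zify at hcodes
  push_cast
  linarith
end

section
/- Fix an integer $p \ge 2$ and integers $d_1,\dots,d_p \ge 2$. The number of pairs $(\pi, (\mathbf{s}_1,\dots,\mathbf{s}_{p-1}))$, where $\pi = \pi_1\cdots\pi_p$ is a permutation of $\{1,\dots,p\}$ and for each $i \in \{1,\dots,p-1\}$ the component $\mathbf{s}_i$ is a staging, with every stage having at most two context variables, of the level $\prod_{k=1}^{i}\{0,\dots,d_{\pi_k}-1\}$, equals $\sum_{\pi \in \mathfrak{S}_p} \prod_{i=1}^{p-1}\left(1 - \binom{i}{2} + \sum_{k=1}^{i} i^{d_{\pi_k}}\right)$. -/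
/-!
Because every `d k` is at least `2`, a stage determines its set of context variables. A staging
is therefore the same as a function `f` sending each point `y` of the level to the context
variables of its block, and the functions that arise are exactly those with `f z = f y` whenever
`z` agrees with `y` on `f y` (`IsCompat`). The correspondence is `card_staging`.

Let `f` be such a function with `(f y).card ≤ 2` throughout.
* Two points that agree on `f y ∩ f z` have `f y = f z` (`IsCompat.glue`).
* Unless `f` is constantly `∅`, some variable `k` lies in every `f y`
  (`IsCompat.exists_common`). Otherwise the contexts would include the three sides of a triangle
  `{a, b}`, `{b, c}`, `{a, c}`, and a point taking one suitable coordinate from each of the three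
  blocks would need `a`, `b` and `c` all in its context.
* If `k` lies in every `f y`, then `f y = {k, g (y k)}` for a unique `g : Fin (d k) → Fin n`, where
  the value `k` of `g` encodes the context `{k}`. So there are `n ^ d k` such `f`
  (`card_common`).

The number of variables common to all contexts of `f` is `1`, with two kinds of exceptions: it is
`0` for the constant function `∅`, and `2` for the `n.choose 2` constant functions whose value is a
two-element set. Counting pairs `(k, f)` with `k` common to all contexts of `f` in two ways gives
`∑ k, n ^ d k = N - 1 + n.choose 2`, where `N` is the number of admissible stagings of one level. The theorem
is the sum over `π` of the product over the levels.
-/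

open Finset

/-- The inclusion of the index set `{1,…,i}` of the `i`-th level into `{1,…,p}`
(here `i` ranges over `Fin (p-1)`, representing level `i+1`). -/
def levelEmb {p : ℕ} (i : Fin (p - 1)) (k : Fin (i.1 + 1)) : Fin p :=
  Fin.castLE (by have := i.isLt; omega) k

variable {n : ℕ} {d : Fin n → ℕ}

/-- `f` assigns a set of context variables to each point of the level, constantly on each of the
stages `stage d (f y) y`. Such functions encode the stagings of the level. -/
def IsCompat (f : (∀ k, Fin (d k)) → Finset (Fin n)) : Prop :=
  ∀ y z, (∀ k ∈ f y, z k = y k) → f z = f y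

lemma stage_congr {S : Finset (Fin n)} {x y : ∀ k, Fin (d k)} (h : y ∈ stage d S x) :
    stage d S x = stage d S y := by
  ext z
  simp only [stage, Set.mem_ofPred_eq] at h ⊢
  constructor <;> intro hz k hk
  · rw [hz k hk, h k hk]
  · rw [hz k hk, h k hk]

lemma mem_stage_self (S : Finset (Fin n)) (x : ∀ k, Fin (d k)) : x ∈ stage d S x :=
  fun _ _ => rfl

lemma exists_ne_of_two_le {m : ℕ} (hm : 2 ≤ m) (a : Fin m) : ∃ b : Fin m, b ≠ a := by
  have : Nontrivial (Fin m) := Fin.nontrivial_iff_two_le.2 hm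
  exact exists_ne a

lemma subset_of_stage_subset (hd : ∀ k, 2 ≤ d k) {S T : Finset (Fin n)} {x : ∀ k, Fin (d k)}
    (h : stage d T x ⊆ stage d S x) : S ⊆ T := by
  intro k hk
  by_contra hkT
  obtain ⟨b, hb⟩ := exists_ne_of_two_le (hd k) (x k)
  have h1 : Function.update x k b ∈ stage d T x := by
    intro j hj
    have : j ≠ k := by rintro rfl; exact hkT hj
    simp [this]
  have := h h1 k hk
  simp at this
  exact hb this

/-- A stage determines its context variables, since every variable takes at least two values. -/
lemma stage_injective (hd : ∀ k, 2 ≤ d k) {S T : Finset (Fin n)} {x : ∀ k, Fin (d k)}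
    (h : stage d S x = stage d T x) : S = T :=
  (subset_of_stage_subset hd h.ge).antisymm (subset_of_stage_subset hd h.le)

lemma IsCompat.stage_eq {f : (∀ k, Fin (d k)) → Finset (Fin n)} (hf : IsCompat f)
    {y w : ∀ k, Fin (d k)} (h : w ∈ stage d (f y) y) : stage d (f w) w = stage d (f y) y := by
  rw [hf y w h, stage_congr h]

/-- The family of stages with contexts given by a compatible function is a staging, and every
staging arises from exactly one compatible function. -/
lemma card_staging (hd : ∀ k, 2 ≤ d k) :
    Nat.card {𝔰 : Set (Set (∀ k : Fin n, Fin (d k))) // IsStaging d 𝔰 ∧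
        ∀ s ∈ 𝔰, ∃ S x, s = stage d S x ∧ S.card ≤ 2} =
      Nat.card {f : (∀ k, Fin (d k)) → Finset (Fin n) // IsCompat f ∧ ∀ y, (f y).card ≤ 2} := by
  symm
  refine Nat.card_congr (Equiv.ofBijective
    (fun f => ⟨Set.range fun y => stage d (f.1 y) y, ⟨?_, ?_, ?_, ?_⟩, ?_⟩) ⟨?_, ?_⟩)
  · rintro _ ⟨y, rfl⟩
    exact ⟨_, _, rfl⟩
  · rintro _ ⟨y, rfl⟩
    exact ⟨y, mem_stage_self _ _⟩
  · rintro _ ⟨y, rfl⟩ _ ⟨z, rfl⟩ hne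
    rw [Set.disjoint_left]
    intro w hy hz
    exact hne ((f.2.1.stage_eq hy).symm.trans (f.2.1.stage_eq hz))
  · intro y
    exact ⟨_, ⟨y, rfl⟩, mem_stage_self _ _⟩
  · rintro _ ⟨y, rfl⟩
    exact ⟨_, _, rfl, f.2.2 y⟩
  · rintro ⟨f, hf, _⟩ ⟨g, hg, _⟩ h
    have h' : (Set.range fun y => stage d (f y) y) = Set.range fun y => stage d (g y) y :=
      congrArg Subtype.val h
    refine Subtype.ext (funext fun y => ?_)
    obtain ⟨z, hz⟩ : stage d (f y) y ∈ Set.range fun y => stage d (g y) y :=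
      h'.subset ⟨y, rfl⟩
    have hyz : y ∈ stage d (g z) z := by
      have := mem_stage_self (f y) y
      rwa [← hz] at this
    exact stage_injective hd (hz.symm.trans (hg.stage_eq hyz).symm)
  · rintro ⟨𝔰, h𝔰, hc⟩
    have key : ∀ y, ∃ S : Finset (Fin n), S.card ≤ 2 ∧ stage d S y ∈ 𝔰 := by
      intro y
      obtain ⟨s, hs, hy⟩ := h𝔰.covers y
      obtain ⟨S, x, rfl, hS⟩ := hc s hs
      exact ⟨S, hS, stage_congr hy ▸ hs⟩
    have uniq : ∀ s ∈ 𝔰, ∀ t ∈ 𝔰, ∀ y, y ∈ s → y ∈ t → s = t := by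
      intro s hs t ht y hys hyt
      by_contra hne
      exact Set.disjoint_left.1 (h𝔰.pairwiseDisjoint s hs t ht hne) hys hyt
    choose f hf2 hfm using key
    refine ⟨⟨f, fun y z hz => ?_, hf2⟩, Subtype.ext ?_⟩
    · have hz' : z ∈ stage d (f y) y := hz
      apply stage_injective hd (x := z)
      rw [← stage_congr hz']
      exact uniq _ (hfm z) _ (hfm y) z (mem_stage_self _ _) hz'
    · ext s
      constructor
      · rintro ⟨y, rfl⟩
        exact hfm y
      · intro hs
        obtain ⟨y, hy⟩ := h𝔰.nonempty s hs
        exact ⟨y, uniq _ (hfm y) _ hs y (mem_stage_self _ _) hy⟩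

/-- Two stages whose contexts do not conflict meet, hence coincide. -/
lemma IsCompat.glue {f : (∀ k, Fin (d k)) → Finset (Fin n)} (hf : IsCompat f)
    {y z : ∀ k, Fin (d k)} (h : ∀ k ∈ f y, k ∈ f z → y k = z k) : f y = f z := by
  let w : ∀ k, Fin (d k) := fun k => if k ∈ f y then y k else z k
  have h1 : f w = f y := hf y w fun k hk => by simp [w, hk]
  have h2 : f w = f z := hf z w fun k hk => by
    by_cases hy : k ∈ f y
    · simp [w, hy, h k hy hk]
    · simp [w, hy]
  exact h1.symm.trans h2

lemma IsCompat.eq_of_common {f : (∀ k, Fin (d k)) → Finset (Fin n)} (hf : IsCompat f)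
    (h2 : ∀ y, (f y).card ≤ 2) {k : Fin n} {y z : ∀ k, Fin (d k)} (hy : k ∈ f y) (hz : k ∈ f z)
    (hyz : y k = z k) : f y = f z := by
  by_contra hne
  -- The contexts conflict at some `l ≠ k`, which forces both of them to be `{k, l}`.
  have : ∃ l ∈ f y, l ∈ f z ∧ y l ≠ z l := by
    by_contra! hcon
    exact hne (hf.glue hcon)
  obtain ⟨l, hly, hlz, hl⟩ := this
  have hkl : k ≠ l := by rintro rfl; exact hl hyz
  have e : ∀ w, k ∈ f w → l ∈ f w → {k, l} = f w := fun w hk hl =>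
    Finset.eq_of_subset_of_card_le (by simp [Finset.insert_subset_iff, hk, hl])
      (by rw [Finset.card_pair hkl]; exact h2 w)
  exact hne ((e y hy hly).symm.trans (e z hz hlz))

/-- Unless all contexts are empty, some variable belongs to all of them. -/
lemma IsCompat.exists_common {f : (∀ k, Fin (d k)) → Finset (Fin n)} (hf : IsCompat f)
    (h2 : ∀ y, (f y).card ≤ 2) (hne : f ≠ fun _ => ∅) : ∃ k, ∀ y, k ∈ f y := by
  have hnon : ∀ y, f y ≠ ∅ := by
    intro y hy
    exact hne (funext fun z => (hf y z (by simp [hy])).trans hy)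
  have hmeet : ∀ y z, ∃ k, k ∈ f y ∧ k ∈ f z := by
    intro y z
    by_contra! hcon
    have e : f y = f z := hf.glue fun k hk hk' => absurd hk' (hcon k hk)
    obtain ⟨k, hk⟩ := Finset.nonempty_iff_ne_empty.2 (hnon y)
    exact hcon k hk (e ▸ hk)
  by_contra! hcon
  obtain ⟨y₁, -⟩ := Function.ne_iff.1 hne
  obtain ⟨a, ha⟩ := Finset.nonempty_iff_ne_empty.2 (hnon y₁)
  obtain ⟨y₂, ha₂⟩ := hcon a
  obtain ⟨b, hb₁, hb₂⟩ := hmeet y₁ y₂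
  have hab : a ≠ b := by rintro rfl; exact ha₂ hb₂
  have pair : ∀ w i j, i ≠ j → i ∈ f w → j ∈ f w → f w = {i, j} := fun w i j hij hi hj =>
    (Finset.eq_of_subset_of_card_le (by simp [Finset.insert_subset_iff, hi, hj])
      (by rw [Finset.card_pair hij]; exact h2 w)).symm
  have e₁ := pair y₁ a b hab ha hb₁
  obtain ⟨y₃, hb₃⟩ := hcon b
  have ha₃ : a ∈ f y₃ := by
    obtain ⟨j, hj₁, hj₃⟩ := hmeet y₁ y₃
    rw [e₁] at hj₁
    grind
  obtain ⟨c, hc₂, hc₃⟩ := hmeet y₂ y₃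
  have hac : a ≠ c := by rintro rfl; exact ha₂ hc₂
  have hbc : b ≠ c := by rintro rfl; exact hb₃ hc₃
  have e₂ := pair y₂ b c hbc hb₂ hc₂
  have e₃ := pair y₃ a c hac ha₃ hc₃
  -- This point agrees with each of `y₁`, `y₂`, `y₃` in one of its two context variables, so its
  -- context can only conflict with theirs in the other one.
  let y : ∀ k, Fin (d k) := fun k => if k = a then y₃ k else if k = b then y₁ k else y₂ k
  have hya : y a = y₃ a := by simp [y]
  have hyb : y b = y₁ b := by simp [y, hab.symm]
  have hyc : y c = y₂ c := by simp [y, hac.symm, hbc.symm]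
  have must : ∀ w i j, f w = {i, j} → y i = w i → j ∈ f y := by
    intro w i j hw hi
    by_contra hj
    have e : f y = f w := hf.glue fun k hk hkw => by
      rw [hw] at hkw
      rcases Finset.mem_insert.1 hkw with rfl | hk'
      · exact hi
      · rw [Finset.mem_singleton.1 hk'] at hk
        exact absurd hk hj
    exact hj (by rw [e, hw]; simp)
  have hc := must y₃ a c e₃ hya
  have ha' := must y₁ b a (by rw [e₁, Finset.pair_comm]) hyb
  have hb := must y₂ c b (by rw [e₂, Finset.pair_comm]) hyc
  have := pair y a b hab ha' hb
  rw [this] at hc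
  grind

open Classical in
/-- The compatible functions on the level all of whose values have at most two elements. -/
noncomputable def compatFns (d : Fin n → ℕ) : Finset ((∀ k, Fin (d k)) → Finset (Fin n)) :=
  {f | IsCompat f ∧ ∀ y, (f y).card ≤ 2}

lemma mem_compatFns {f : (∀ k, Fin (d k)) → Finset (Fin n)} :
    f ∈ compatFns d ↔ IsCompat f ∧ ∀ y, (f y).card ≤ 2 := by
  simp [compatFns]

open Classical in
/-- A compatible function with `k` in every context has the form `y ↦ {k, g (y k)}` for a unique
`g`. -/
lemma card_common (hd : ∀ k, 2 ≤ d k) (k : Fin n) :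
    #{f ∈ compatFns d | ∀ y, k ∈ f y} = n ^ d k := by
  have hpos : ∀ j, 0 < d j := fun j => by have := hd j; omega
  let y₀ : ∀ j, Fin (d j) := fun j => ⟨0, hpos j⟩
  rw [show n ^ d k = #(univ : Finset (Fin (d k) → Fin n)) by simp]
  symm
  refine Finset.card_bij (fun g _ => fun y => {k, g (y k)}) ?_ ?_ ?_
  · intro g _
    simp only [Finset.mem_filter, mem_compatFns]
    refine ⟨⟨fun y z h => ?_, fun y => Finset.card_le_two⟩, fun y => by simp⟩
    simp only
    rw [h k (by simp)]
  · intro g _ g' _ h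
    funext v
    have := congrFun h (Function.update y₀ k v)
    simp only [Function.update_self] at this
    have h1 : g v ∈ ({k, g' v} : Finset (Fin n)) := by rw [← this]; simp
    have h2 : g' v ∈ ({k, g v} : Finset (Fin n)) := by rw [this]; simp
    simp only [Finset.mem_insert, Finset.mem_singleton] at h1 h2
    grind
  · intro f hf
    simp only [Finset.mem_filter, mem_compatFns] at hf
    obtain ⟨⟨hf, h2⟩, hk⟩ := hf
    have key : ∀ y, ∃ a, f y = {k, a} := by
      intro y
      by_cases h : ∃ a ∈ f y, a ≠ k
      · obtain ⟨a, ha, hak⟩ := h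
        exact ⟨a, (Finset.eq_of_subset_of_card_le
          (by simp [Finset.insert_subset_iff, hk y, ha])
          (by rw [Finset.card_pair hak.symm]; exact h2 y)).symm⟩
      · refine ⟨k, ?_⟩
        push Not at h
        ext a
        have := hk y
        grind
    choose g hg using key
    refine ⟨fun v => g (Function.update y₀ k v), Finset.mem_univ _, ?_⟩
    funext y
    simp only
    rw [← hg]
    exact hf.eq_of_common h2 (hk _) (hk _) (by simp)

open Classical in
/-- The number of variables common to all contexts is `1`, corrected at the constant functions. -/
lemma card_commonVars (hd : ∀ k, 2 ≤ d k) {f : (∀ k, Fin (d k)) → Finset (Fin n)}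
    (hf : f ∈ compatFns d) :
    (#{k | ∀ y, k ∈ f y} : ℤ) = 1 - (if f = fun _ => ∅ then 1 else 0) +
      (if f ∈ (powersetCard 2 univ).image (fun S _ => S) then 1 else 0) := by
  have hpos : ∀ j, 0 < d j := fun j => by have := hd j; omega
  let y₀ : ∀ j, Fin (d j) := fun j => ⟨0, hpos j⟩
  obtain ⟨hf, h2⟩ := mem_compatFns.1 hf
  by_cases h0 : f = fun _ => ∅
  · subst h0
    have : (fun _ : (∀ k, Fin (d k)) => (∅ : Finset (Fin n))) ∉
        (powersetCard 2 univ).image (fun S _ => S) := by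
      simp only [Finset.mem_image, Finset.mem_powersetCard, not_exists, not_and]
      intro S hS h
      have := congrFun h y₀
      simp [show S = ∅ from this] at hS
    rw [if_pos rfl, if_neg this]
    have : Nonempty (∀ k, Fin (d k)) := ⟨y₀⟩
    simp
  rw [if_neg h0]
  have hsub : ∀ y, ({k | ∀ y, k ∈ f y} : Finset (Fin n)) ⊆ f y := by
    intro y k hk
    exact (Finset.mem_filter.1 hk).2 y
  obtain ⟨k, hk⟩ := hf.exists_common h2 h0
  have h1 : 0 < #({k | ∀ y, k ∈ f y} : Finset (Fin n)) :=
    Finset.card_pos.2 ⟨k, by simpa using hk⟩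
  have hle : #({k | ∀ y, k ∈ f y} : Finset (Fin n)) ≤ 2 :=
    (Finset.card_le_card (hsub y₀)).trans (h2 y₀)
  by_cases hc : f ∈ (powersetCard 2 univ).image (fun S _ => S)
  · rw [if_pos hc]
    simp only [Finset.mem_image, Finset.mem_powersetCard] at hc
    obtain ⟨S, ⟨-, hS⟩, rfl⟩ := hc
    have : Nonempty (∀ k, Fin (d k)) := ⟨y₀⟩
    simp [hS]
  · rw [if_neg hc]
    have : #({k | ∀ y, k ∈ f y} : Finset (Fin n)) ≠ 2 := by
      intro hcard
      refine hc (Finset.mem_image.2 ⟨_, Finset.mem_powersetCard.2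
        ⟨Finset.subset_univ _, hcard⟩, ?_⟩)
      funext y
      exact Finset.eq_of_subset_of_card_le (hsub y) (hcard ▸ h2 y)
    have : #({k | ∀ y, k ∈ f y} : Finset (Fin n)) = 1 := by omega
    rw [this]
    norm_num

open Classical in
lemma card_compatFns (hd : ∀ k, 2 ≤ d k) :
    (#(compatFns d) : ℤ) = 1 - (n.choose 2 : ℕ) + ∑ k, (n : ℤ) ^ d k := by
  have hpos : ∀ j, 0 < d j := fun j => by have := hd j; omega
  let y₀ : ∀ j, Fin (d j) := fun j => ⟨0, hpos j⟩
  -- Count the pairs `(k, f)` with `k` in every context of `f` in two ways.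
  have dc : ∑ k, (n : ℤ) ^ d k = ∑ f ∈ compatFns d, (#{k | ∀ y, k ∈ f y} : ℤ) := by
    have := Finset.sum_card_bipartiteAbove_eq_sum_card_bipartiteBelow
      (s := (univ : Finset (Fin n))) (t := compatFns d) (fun k f => ∀ y, k ∈ f y)
    simp only [Finset.bipartiteAbove, Finset.bipartiteBelow, card_common hd] at this
    exact_mod_cast this
  have hconst : ∀ S : Finset (Fin n), S.card ≤ 2 →
      (fun _ : (∀ k, Fin (d k)) => S) ∈ compatFns d := fun S hS =>
    mem_compatFns.2 ⟨fun _ _ _ => rfl, fun _ => hS⟩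
  have hE : ∑ f ∈ compatFns d, (if f = fun _ => ∅ then (1 : ℤ) else 0) = 1 := by
    rw [Finset.sum_ite_eq', if_pos (hconst ∅ (by simp))]
  have hP : ∑ f ∈ compatFns d,
      (if f ∈ (powersetCard 2 univ).image (fun S _ => S) then (1 : ℤ) else 0) = n.choose 2 := by
    have hsub : ((powersetCard 2 univ).image (fun S _ => S) :
        Finset ((∀ k, Fin (d k)) → Finset (Fin n))) ⊆ compatFns d := by
      intro f hf
      obtain ⟨S, hS, rfl⟩ := Finset.mem_image.1 hf
      exact hconst S (Finset.mem_powersetCard.1 hS).2.le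
    rw [Finset.sum_ite_mem, Finset.inter_eq_right.2 hsub, Finset.sum_const,
      Finset.card_image_of_injective _ (fun S T h => congrFun h y₀)]
    simp
  rw [dc, Finset.sum_congr rfl fun f hf => card_commonVars hd hf, Finset.sum_add_distrib,
    Finset.sum_sub_distrib, hE, hP]
  simp

/-- The number of stagings of a single level by stages with at most two context variables. -/
lemma card_level (hd : ∀ k, 2 ≤ d k) :
    (Nat.card {𝔰 : Set (Set (∀ k : Fin n, Fin (d k))) // IsStaging d 𝔰 ∧
        ∀ s ∈ 𝔰, ∃ S x, s = stage d S x ∧ S.card ≤ 2} : ℤ) =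
      1 - (n.choose 2 : ℕ) + ∑ k, (n : ℤ) ^ d k := by
  rw [card_staging hd, ← card_compatFns hd]
  congr 1
  exact Nat.subtype_card _ fun f => mem_compatFns

/-- The number of pairs `(π, (𝔰_1, …, 𝔰_{p-1}))`, where `π` is a permutation of `{1,…,p}` and
`𝔰_i` is a staging of the level `∏_{k=1}^{i} {0,…,d_{π_k} - 1}` in which every stage has at
most two context variables, equals
`∑_{π ∈ 𝔖_p} ∏_{i=1}^{p-1} (1 - C(i,2) + ∑_{k=1}^{i} i^{d_{π_k}})`. -/
theorem card_cstrees
    (p : ℕ) (hp : 2 ≤ p) (d : Fin p → ℕ) (hd : ∀ k, 2 ≤ d k) :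
    (Nat.card ((π : Equiv.Perm (Fin p)) × ∀ i : Fin (p - 1),
        {𝔰 : Set (Set (∀ k : Fin (i.1 + 1), Fin (d (π (levelEmb i k))))) //
          IsStaging (fun k => d (π (levelEmb i k))) 𝔰 ∧
          ∀ s ∈ 𝔰, ∃ S x, s = stage (fun k => d (π (levelEmb i k))) S x ∧ S.card ≤ 2}) : ℤ)
      = ∑ π : Equiv.Perm (Fin p), ∏ i : Fin (p - 1),
          (1 - (((i.1 + 1).choose 2 : ℕ) : ℤ) +
            ∑ k : Fin (i.1 + 1), ((i.1 + 1 : ℕ) : ℤ) ^ d (π (levelEmb i k))) := by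
  classical
  rw [Nat.card_sigma]
  push_cast
  refine Finset.sum_congr rfl fun π _ => ?_
  rw [Nat.card_pi]
  push_cast
  refine Finset.prod_congr rfl fun i _ => ?_
  have := card_level (d := fun k => d (π (levelEmb i k))) fun k => hd _
  push_cast at this
  exact this
end
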